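/- Let G = ℤ/2 × ℤ/2 and let s : G → ℤ/2 be the projection onto the second factor. Define α : G × G × G → ℂˣ by α((a₁, s₁), (a₂, s₂), (a₃, s₃)) = (-1)^(s₁' * s₂' * a₃'), where x' ∈ {0, 1} denotes the integer representative of x ∈ ℤ/2. Then α is a twisted 3-cocycle on G with respect to s, and α is not a twisted 3-coboundary. (This is the nontrivial mixed 't Hooft anomaly of ℤ₂ × ℤ₂ᵀ appearing in the paper's Morita equivalence between Vec_{ℤ₄ᵀ} and Vec^α_{ℤ₂×ℤ₂ᵀ}: the ℤ₂-domain wall carries a Kramers doublet.) -/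

import Mathlib

noncomputable section

/-- Complex conjugation on the group of units `ℂˣ`. -/
def conjUnits : ℂˣ →* ℂˣ := Units.map (starRingEnd ℂ).toMonoidHom

/-- The group `G = ℤ/2 × ℤ/2` (written additively). -/
abbrev G := ZMod 2 × ZMod 2

/-- The grading homomorphism `s : G → ℤ/2`, projection onto the second factor. -/
def s : G → ZMod 2 := fun g => g.2

/-- The twisted action of `g ∈ G` on `ℂˣ`: trivial if `s g = 0`, complex conjugation
otherwise. -/
def tAct (g : G) (z : ℂˣ) : ℂˣ := if s g = 0 then z else conjUnits z

/-- Twisted 3-cocycle condition on `G` with respect to `s`. -/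
def IsTwisted3Cocycle (ω : G → G → G → ℂˣ) : Prop :=
  ∀ g₁ g₂ g₃ g₄,
    tAct g₁ (ω g₂ g₃ g₄) * ω g₁ (g₂ + g₃) g₄ * ω g₁ g₂ g₃ =
      ω (g₁ + g₂) g₃ g₄ * ω g₁ g₂ (g₃ + g₄)

/-- Twisted 3-coboundary condition on `G` with respect to `s`. -/
def IsTwisted3Coboundary (ω : G → G → G → ℂˣ) : Prop :=
  ∃ β : G → G → ℂˣ, ∀ g₁ g₂ g₃,
    ω g₁ g₂ g₃ = tAct g₁ (β g₂ g₃) * (β (g₁ + g₂) g₃)⁻¹ * β g₁ (g₂ + g₃) * (β g₁ g₂)⁻¹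

/-- The mixed anomaly cocycle `α((a₁,s₁),(a₂,s₂),(a₃,s₃)) = (-1)^(s₁ s₂ a₃)` of
`ℤ₂ × ℤ₂ᵀ`. -/
def α : G → G → G → ℂˣ := fun g₁ g₂ g₃ =>
  (-1 : ℂˣ) ^ (g₁.2.val * g₂.2.val * g₃.1.val)

/-- The bookkeeping behind the slant product, in an additive commutative group. -/
lemma slant_add {A : Type*} [AddCommGroup A] (e tt att a0 w cta z0a tta cat ta z00 : A)
    (h1 : 0 = tt + -att + a0 + -w) (h2 : e = cta + -z0a + tta + -tt)
    (h3 : 0 = cat + -att + tta + -ta) (h4 : 0 = z00 + -a0 + a0 + -a0)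
    (h5 : 0 = z0a + -z0a + z0a + -z00) : e + (w + cat) = ta + cta := by
  grind

/-- Multiplicative version of `slant_add`. -/
lemma slant_mul {A : Type*} [CommGroup A] (e tt att a0 w cta z0a tta cat ta z00 : A)
    (h1 : 1 = tt * att⁻¹ * a0 * w⁻¹) (h2 : e = cta * z0a⁻¹ * tta * tt⁻¹)
    (h3 : 1 = cat * att⁻¹ * tta * ta⁻¹) (h4 : 1 = z00 * a0⁻¹ * a0 * a0⁻¹)
    (h5 : 1 = z0a * z0a⁻¹ * z0a * z00⁻¹) : e * (w * cat) = ta * cta :=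
  slant_add (A := Additive A) e tt att a0 w cta z0a tta cat ta z00 h1 h2 h3 h4 h5

lemma tAct_alpha (g g₁ g₂ g₃ : G) : tAct g (α g₁ g₂ g₃) = α g₁ g₂ g₃ := by
  unfold tAct α
  split_ifs
  · rfl
  · rw [map_pow]
    congr 1
    ext
    simp [conjUnits]

lemma tAct_zero (a : ZMod 2) (z : ℂˣ) : tAct (a, 0) z = z := by simp [tAct, s]

lemma tAct_one (a : ZMod 2) (z : ℂˣ) : tAct (a, 1) z = conjUnits z := by simp [tAct, s]

lemma alpha_cocycle : IsTwisted3Cocycle α := by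
  intro g₁ g₂ g₃ g₄
  rw [tAct_alpha]
  unfold α
  rw [← pow_add, ← pow_add, ← pow_add]
  have h : ∀ g₁ g₂ g₃ g₄ : G,
      (g₂.2.val * g₃.2.val * g₄.1.val + g₁.2.val * (g₂ + g₃).2.val * g₄.1.val
        + g₁.2.val * g₂.2.val * g₃.1.val) % 2 =
      ((g₁ + g₂).2.val * g₃.2.val * g₄.1.val
        + g₁.2.val * g₂.2.val * (g₃ + g₄).1.val) % 2 := by decide
  have q : (-1 : ℂˣ) ^ 2 = 1 := by simp
  rw [pow_eq_pow_mod _ q, h, ← pow_eq_pow_mod _ q]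

lemma alpha_not_coboundary : ¬ IsTwisted3Coboundary α := by
  rintro ⟨β, h⟩
  have h1 := h (1, 0) (0, 1) (0, 1)
  have h2 := h (0, 1) (0, 1) (1, 0)
  have h3 := h (0, 1) (1, 0) (0, 1)
  have h4 := h (1, 0) (0, 0) (0, 0)
  have h5 := h (0, 0) (0, 0) (1, 0)
  have e : (1 : ZMod 2) + 1 = 0 := by decide
  have v : (1 : ZMod 2).val = 1 := rfl
  simp only [tAct_zero, tAct_one, Prod.mk_add_mk, add_zero, zero_add, e, α, v, ZMod.val_zero,
    mul_zero, mul_one, pow_zero, pow_one] at h1 h2 h3 h4 h5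
  have k := slant_mul _ _ _ _ _ _ _ _ _ _ _ h1 h2 h3 h4 h5
  have k1 := congrArg (fun z : ℂˣ => (z : ℂ)) k
  simp only [conjUnits, Units.val_mul, Units.val_neg, Units.val_one, Units.coe_map,
    RingHom.toMonoidHom_eq_coe, MonoidHom.coe_coe, Complex.mul_conj] at k1
  have k2 : -1 * Complex.normSq (β (1, 0) (0, 1)) = Complex.normSq (β (0, 1) (1, 0)) := by
    exact_mod_cast k1
  have p1 := Complex.normSq_pos.mpr (β (1, 0) (0, 1)).ne_zero
  have p2 := Complex.normSq_pos.mpr (β (0, 1) (1, 0)).ne_zero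
  linarith

/-- The mixed 't Hooft anomaly of `ℤ₂ × ℤ₂ᵀ`: `α` is a twisted 3-cocycle with respect
to `s`, and it is not a twisted 3-coboundary. -/
theorem anomaly_cocycle_nontrivial :
    IsTwisted3Cocycle α ∧ ¬ IsTwisted3Coboundary α := by
  exact ⟨alpha_cocycle, alpha_not_coboundary⟩

end
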